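/- arXiv:2303.06472 — 3 statements merged into one kernel-verified Lean document; each statement's English description precedes it below -/
import Mathlib

section
/- Let φ be a flow on ℝⁿ and let N be an isolating block for an isolated invariant compactum K, with exit set L. Then the set N ∖ N⁺ is open in N; for every x ∈ N ∖ N⁺ the exit time τ(x) is finite, x[0,τ(x)] ⊆ N, x·τ(x) ∈ L, and x·u ∉ L for every u with 0 ≤ u < τ(x); and the exit time map τ : N ∖ N⁺ → [0,∞) is continuous. -/
/-!
A forward orbit leaves the closed set `N` at the last time `τ` of its initial stay. The point
reached then is in `∂N`, and it lies in `L`, since the orbits through the points of `∂N ∖ L` enter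
the interior of `N`. Points of `L` leave `N` at once, so `L` is not met before `τ`
(`exitTime_basic`).

Continuity of `τ` at `x` has two halves. From above: `x (τ x + δ) ∉ N` for some small `δ > 0`,
an open condition on `x`. From below: for `b < τ x` the orbit arc `x [0, b]` misses the closed
set `L`; by compactness of `[0, b]` so do the arcs `y [0, b]` for `y` near `x`, and as
`y (τ y) ∈ L` this forces `τ y > b`.
-/

open Set

/-- A flow on `ℝⁿ`: a continuous map `φ : ℝⁿ × ℝ → ℝⁿ` with `φ (x, 0) = x` and
`φ (φ (x, s), t) = φ (x, s + t)`. -/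
structure FlowRn (n : ℕ) where
  toFun : (Fin n → ℝ) → ℝ → (Fin n → ℝ)
  continuous_toFun : Continuous fun p : (Fin n → ℝ) × ℝ => toFun p.1 p.2
  map_zero : ∀ x, toFun x 0 = x
  map_add : ∀ x s t, toFun (toFun x s) t = toFun x (s + t)

variable {n : ℕ}

/-- A set `M` is invariant if `x ℝ ⊆ M` for every `x ∈ M`. -/
def FlowRn.IsInvariant (φ : FlowRn n) (M : Set (Fin n → ℝ)) : Prop :=
  ∀ x ∈ M, ∀ t : ℝ, φ.toFun x t ∈ M

/-- `N⁺ = {x ∈ N : x [0, ∞) ⊆ N}`. -/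
def posAsymptotic (φ : FlowRn n) (N : Set (Fin n → ℝ)) : Set (Fin n → ℝ) :=
  {x ∈ N | ∀ t ≥ (0 : ℝ), φ.toFun x t ∈ N}

/-- `N⁻ = {x ∈ N : x (-∞, 0] ⊆ N}`. -/
def negAsymptotic (φ : FlowRn n) (N : Set (Fin n → ℝ)) : Set (Fin n → ℝ) :=
  {x ∈ N | ∀ t ≤ (0 : ℝ), φ.toFun x t ∈ N}

/-- The exit time `τ (x) = sup {t ≥ 0 : x [0, t] ⊆ N}` of a point `x ∈ N ∖ N⁺`. -/
noncomputable def exitTime (φ : FlowRn n) (N : Set (Fin n → ℝ)) (x : Fin n → ℝ) : ℝ :=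
  sSup {t : ℝ | 0 ≤ t ∧ ∀ u ∈ Icc 0 t, φ.toFun x u ∈ N}

/-- An isolating block `N` (with exit set `L` and entrance set `L'`) for the isolated
invariant compactum `K`. -/
structure IsolatingBlock (φ : FlowRn n) (K N L L' : Set (Fin n → ℝ)) : Prop where
  compact_N : IsCompact N
  compact_K : IsCompact K
  invariant_K : φ.IsInvariant K
  subset_interior : K ⊆ interior N
  maximal : ∀ M ⊆ N, φ.IsInvariant M → M ⊆ K
  compact_L : IsCompact L
  compact_L' : IsCompact L'
  exit_subset : L ⊆ frontier N
  entrance_subset : L' ⊆ frontier N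
  boundary_eq : frontier N = L ∪ L'
  entrance_strict : ∀ x ∈ L', ∃ ε > (0 : ℝ), ∀ t ∈ Ico (-ε) (0 : ℝ), φ.toFun x t ∉ N
  exit_strict : ∀ x ∈ L, ∃ δ > (0 : ℝ), ∀ t ∈ Ioc (0 : ℝ) δ, φ.toFun x t ∉ N
  exit_from_interior : ∀ x ∈ L, ∃ ε > (0 : ℝ), ∀ t ∈ Ico (-ε) (0 : ℝ), φ.toFun x t ∈ interior N
  enter_to_interior :
    ∀ x ∈ frontier N \ L, ∃ δ > (0 : ℝ), ∀ t ∈ Ioc (0 : ℝ) δ, φ.toFun x t ∈ interior N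

open Filter Topology

theorem FlowRn.continuous_time (φ : FlowRn n) (x : Fin n → ℝ) :
    Continuous fun t : ℝ => φ.toFun x t :=
  φ.continuous_toFun.comp (by fun_prop : Continuous fun t : ℝ => (x, t))

theorem FlowRn.continuous_space (φ : FlowRn n) (t : ℝ) :
    Continuous fun x : Fin n → ℝ => φ.toFun x t :=
  φ.continuous_toFun.comp (by fun_prop : Continuous fun x : Fin n → ℝ => (x, t))

/-- A time at which the orbit is outside `N` bounds the times of its initial stay in `N`. -/
theorem mem_upperBounds_of_notMem {φ : FlowRn n} {N : Set (Fin n → ℝ)} {x : Fin n → ℝ} {s : ℝ}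
    (hs : 0 ≤ s) (hx : φ.toFun x s ∉ N) :
    s ∈ upperBounds {t : ℝ | 0 ≤ t ∧ ∀ u ∈ Icc 0 t, φ.toFun x u ∈ N} := by
  rintro t ⟨-, ht⟩
  by_contra! hlt
  exact hx (ht s ⟨hs, hlt.le⟩)

theorem exists_notMem {φ : FlowRn n} {N : Set (Fin n → ℝ)} {x : Fin n → ℝ}
    (hx : x ∈ N \ posAsymptotic φ N) : ∃ s ≥ (0 : ℝ), φ.toFun x s ∉ N := by
  by_contra! h
  exact hx.2 ⟨hx.1, h⟩

theorem zero_mem_times {φ : FlowRn n} {N : Set (Fin n → ℝ)} {x : Fin n → ℝ} (hx : x ∈ N) :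
    (0 : ℝ) ∈ {t : ℝ | 0 ≤ t ∧ ∀ u ∈ Icc 0 t, φ.toFun x u ∈ N} := by
  refine ⟨le_rfl, fun u hu => ?_⟩
  obtain rfl : u = 0 := le_antisymm hu.2 hu.1
  rwa [φ.map_zero]

theorem exitTime_le {φ : FlowRn n} {N : Set (Fin n → ℝ)} {x : Fin n → ℝ} {s : ℝ}
    (hxN : x ∈ N) (hs : 0 ≤ s) (hx : φ.toFun x s ∉ N) : exitTime φ N x ≤ s :=
  csSup_le ⟨0, zero_mem_times hxN⟩ (mem_upperBounds_of_notMem hs hx)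

/-- The pointwise properties of the exit time. The supremum is attained because `N` is closed, and
since the stay in `N` cannot be prolonged beyond it, the point reached is neither in the interior
of `N` nor in `∂N ∖ L`. -/
theorem exitTime_basic {φ : FlowRn n} {K N L L' : Set (Fin n → ℝ)}
    (hN : IsolatingBlock φ K N L L') {x : Fin n → ℝ} (hx : x ∈ N \ posAsymptotic φ N) :
    BddAbove {t : ℝ | 0 ≤ t ∧ ∀ u ∈ Icc 0 t, φ.toFun x u ∈ N} ∧
      0 ≤ exitTime φ N x ∧
      (∀ u ∈ Icc 0 (exitTime φ N x), φ.toFun x u ∈ N) ∧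
      φ.toFun x (exitTime φ N x) ∈ L ∧
      (∀ u : ℝ, 0 ≤ u → u < exitTime φ N x → φ.toFun x u ∉ L) := by
  obtain ⟨s, hs, hxs⟩ := exists_notMem hx
  have hclosed : IsClosed N := hN.compact_N.isClosed
  have hbdd : BddAbove {t : ℝ | 0 ≤ t ∧ ∀ u ∈ Icc 0 t, φ.toFun x u ∈ N} :=
    ⟨s, mem_upperBounds_of_notMem hs hxs⟩
  have h0 : 0 ≤ exitTime φ N x := le_csSup hbdd (zero_mem_times hx.1)
  have hlt : ∀ u, 0 ≤ u → u < exitTime φ N x → φ.toFun x u ∈ N := by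
    intro u hu hut
    obtain ⟨t, ht, hut'⟩ := exists_lt_of_lt_csSup ⟨0, zero_mem_times hx.1⟩ hut
    exact ht.2 u ⟨hu, hut'.le⟩
  -- The supremum is attained, as `N` is closed.
  have hτ : φ.toFun x (exitTime φ N x) ∈ N := by
    rcases h0.eq_or_lt with h | h
    · rw [← h, φ.map_zero]; exact hx.1
    · have hmem : exitTime φ N x ∈ closure (Ico 0 (exitTime φ N x)) := by
        rw [closure_Ico h.ne]; exact ⟨h0, le_rfl⟩
      exact closure_minimal (fun u hu => hlt u hu.1 hu.2)
        (hclosed.preimage (φ.continuous_time x)) hmem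
  have hIcc : ∀ u ∈ Icc 0 (exitTime φ N x), φ.toFun x u ∈ N := by
    intro u hu
    rcases hu.2.eq_or_lt with h | h
    · rw [h]; exact hτ
    · exact hlt u hu.1 h
  -- The stay in `N` cannot be prolonged beyond its supremum.
  have hext : ¬ ∃ δ > (0 : ℝ), ∀ t ∈ Ioc (0 : ℝ) δ,
      φ.toFun x (exitTime φ N x + t) ∈ N := by
    rintro ⟨δ, hδ, h⟩
    have : exitTime φ N x + δ ≤ exitTime φ N x := by
      refine le_csSup hbdd ⟨by linarith, fun u hu => ?_⟩
      rcases le_or_gt u (exitTime φ N x) with hle | hgt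
      · exact hIcc u ⟨hu.1, hle⟩
      · simpa using h (u - exitTime φ N x) ⟨by linarith, by linarith [hu.2]⟩
    linarith
  have hfront : φ.toFun x (exitTime φ N x) ∈ frontier N := by
    refine ⟨subset_closure hτ, fun hint => hext ?_⟩
    have hnhds : (fun t : ℝ => φ.toFun x t) ⁻¹' interior N ∈ 𝓝 (exitTime φ N x) :=
      (isOpen_interior.preimage (φ.continuous_time x)).mem_nhds hint
    obtain ⟨ε, hε, hball⟩ := Metric.mem_nhds_iff.1 hnhds
    refine ⟨ε / 2, by linarith, fun t ht => interior_subset (hball ?_)⟩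
    rw [Metric.mem_ball, Real.dist_eq, add_sub_cancel_left, abs_of_pos ht.1]
    linarith [ht.2]
  have hL : φ.toFun x (exitTime φ N x) ∈ L := by
    by_contra hnL
    obtain ⟨δ, hδ, h⟩ := hN.enter_to_interior _ ⟨hfront, hnL⟩
    refine hext ⟨δ, hδ, fun t ht => ?_⟩
    rw [← φ.map_add]
    exact interior_subset (h t ht)
  refine ⟨hbdd, h0, hIcc, hL, fun u hu hut huL => ?_⟩
  obtain ⟨δ, hδ, h⟩ := hN.exit_strict _ huL
  have hpos : 0 < min δ (exitTime φ N x - u) := lt_min hδ (by linarith)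
  refine h (min δ (exitTime φ N x - u)) ⟨hpos, min_le_left _ _⟩ ?_
  rw [φ.map_add]
  exact hIcc _ ⟨by linarith, by linarith [min_le_right δ (exitTime φ N x - u)]⟩

/-- For an isolating block `N` of an isolated invariant compactum `K` with
exit set `L`: the set `N ∖ N⁺` is open in `N`; for every `x ∈ N ∖ N⁺` the exit time is finite
(the defining set of times is bounded above), nonnegative, `x [0, τ(x)] ⊆ N`,
`x τ(x) ∈ L` and `x u ∉ L` for `0 ≤ u < τ(x)`; and `τ` is continuous on `N ∖ N⁺`. -/
theorem exitTime_spec (φ : FlowRn n) (K N L L' : Set (Fin n → ℝ))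
    (hN : IsolatingBlock φ K N L L') :
    IsOpen ((Subtype.val : N → (Fin n → ℝ)) ⁻¹' (N \ posAsymptotic φ N)) ∧
    (∀ x ∈ N \ posAsymptotic φ N,
      BddAbove {t : ℝ | 0 ≤ t ∧ ∀ u ∈ Icc 0 t, φ.toFun x u ∈ N} ∧
      0 ≤ exitTime φ N x ∧
      (∀ u ∈ Icc 0 (exitTime φ N x), φ.toFun x u ∈ N) ∧
      φ.toFun x (exitTime φ N x) ∈ L ∧
      (∀ u : ℝ, 0 ≤ u → u < exitTime φ N x → φ.toFun x u ∉ L)) ∧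
    ContinuousOn (exitTime φ N) (N \ posAsymptotic φ N) := by
  have hclosed : IsClosed N := hN.compact_N.isClosed
  refine ⟨?_, fun x hx => exitTime_basic hN hx, fun x hx => ?_⟩
  · rw [isOpen_iff_mem_nhds]
    intro x hx
    obtain ⟨s, hs, hxs⟩ := exists_notMem hx
    have hopen : IsOpen {y : N | φ.toFun y s ∉ N} :=
      hclosed.isOpen_compl.preimage ((φ.continuous_space s).comp continuous_subtype_val)
    filter_upwards [hopen.mem_nhds hxs] with y hy
    exact ⟨y.2, fun h => hy (h.2 s hs)⟩
  · obtain ⟨-, h0, -, hL, hnL⟩ := exitTime_basic hN hx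
    refine tendsto_order.2 ⟨fun b hb => ?_, fun b hb => ?_⟩
    · have hev : ∀ᶠ y in 𝓝 x, ∀ u ∈ Icc 0 b, φ.toFun y u ∉ L := by
        refine isCompact_Icc.eventually_forall_of_forall_eventually fun u hu => ?_
        exact (hN.compact_L.isClosed.isOpen_compl.preimage φ.continuous_toFun).mem_nhds
          (hnL u hu.1 (hu.2.trans_lt hb))
      filter_upwards [mem_nhdsWithin_of_mem_nhds hev, self_mem_nhdsWithin] with y hy hyN
      obtain ⟨-, hy0, -, hyL, -⟩ := exitTime_basic hN hyN
      by_contra! hle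
      exact hy _ ⟨hy0, hle⟩ hyL
    · obtain ⟨δ, hδ, h⟩ := hN.exit_strict _ hL
      -- Half the gap to `b` makes the bound on the exit times strict.
      obtain ⟨t, ht0, htδ, htb⟩ : ∃ t > 0, t ≤ δ ∧ exitTime φ N x + t < b := by
        refine ⟨min δ ((b - exitTime φ N x) / 2), lt_min hδ (by linarith), min_le_left _ _, ?_⟩
        linarith [min_le_right δ ((b - exitTime φ N x) / 2)]
      have hout : φ.toFun x (exitTime φ N x + t) ∉ N := by
        rw [← φ.map_add]
        exact h t ⟨ht0, htδ⟩
      have hev : ∀ᶠ y in 𝓝 x, φ.toFun y (exitTime φ N x + t) ∉ N :=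
        (hclosed.isOpen_compl.preimage (φ.continuous_space _)).mem_nhds hout
      filter_upwards [mem_nhdsWithin_of_mem_nhds hev, self_mem_nhdsWithin] with y hy hyN
      exact (exitTime_le hyN.1 (by linarith) hy).trans_lt htb
end

section
/- Let φ be a flow on ℝⁿ and let N be an isolating block for K with exit set L. For every open set U ⊆ ℝⁿ with N⁻ ⊆ U there exists s₀ > 0 such that: (a) xs ∈ U for every x ∈ N⁺ and every s ≥ s₀; (b) xt ∈ U for every x ∈ N ∖ N⁺ and every t with s₀ ≤ t ≤ τ(x); consequently (c) f_s(N) ⊆ U ∪ L for every s ≥ s₀. -/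
/-!
Everything rests on one compactness fact (`exists_time_backward_mem`): for some `s₀ > 0`, every
`y` with `y[-s₀, 0] ⊆ N` lies in `U`. Otherwise the compact sets of points outside `U` whose orbit
over `[-(k + 1), 0]` stays in `N` form a decreasing sequence of nonempty sets, and a common point
lies in `N⁻ \ U`. Applied to `y = xt` this gives `xt ∈ U` whenever `t ≥ s₀` and `x[0, t] ⊆ N`,
which covers (a), (b) and the first case of `f_s`.

In the second case of `f_s`, the point `xτ(x)` is in `N` and the orbit leaves `N` at arbitrarily
small positive times (`exitTime_spec`). That is impossible in the interior of `N` by continuity,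
and on `∂N \ L` because the flow enters the interior there, so `xτ(x) ∈ L`.
-/

open Set

variable {n : ℕ}

open Classical in
/-- The map `f_s : N → N`, `f_s (x) = x s` if `x [0, s] ⊆ N` and `f_s (x) = x τ(x)` otherwise. -/
noncomputable def flowMap (φ : FlowRn n) (N : Set (Fin n → ℝ)) (s : ℝ) (x : Fin n → ℝ) :
    Fin n → ℝ :=
  if ∀ u ∈ Icc (0 : ℝ) s, φ.toFun x u ∈ N then φ.toFun x s else φ.toFun x (exitTime φ N x)

/-- The part of the orbit of `x` over `[0, τ(x)]` lies in `N`, with `τ(x)` a genuine (finite,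
attained) supremum, and the orbit is outside `N` at
arbitrarily small times afterwards. -/
theorem exitTime_spec_s2 (φ : FlowRn n) {N : Set (Fin n → ℝ)} (hcl : IsClosed N) {x : Fin n → ℝ}
    (hx : x ∈ N \ posAsymptotic φ N) :
    0 ≤ exitTime φ N x ∧ (∀ u ∈ Icc 0 (exitTime φ N x), φ.toFun x u ∈ N) ∧
      ∀ δ > (0 : ℝ), ∃ t ∈ Ioc (0 : ℝ) δ, φ.toFun (φ.toFun x (exitTime φ N x)) t ∉ N := by
  obtain ⟨hxN, hxP⟩ := hx
  set S : Set ℝ := {t : ℝ | 0 ≤ t ∧ ∀ u ∈ Icc 0 t, φ.toFun x u ∈ N} with hS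
  have hτ : exitTime φ N x = sSup S := rfl
  rw [hτ]
  have h0 : (0 : ℝ) ∈ S := by
    refine ⟨le_rfl, fun u hu => ?_⟩
    rw [le_antisymm hu.2 hu.1, φ.map_zero]
    exact hxN
  have hbdd : BddAbove S := by
    obtain ⟨T, hT0, hT⟩ : ∃ T ≥ (0 : ℝ), φ.toFun x T ∉ N := by
      by_contra! h
      exact hxP ⟨hxN, h⟩
    refine ⟨T, fun t ht => ?_⟩
    by_contra! h
    exact hT (ht.2 T ⟨hT0, h.le⟩)
  have hτ0 : 0 ≤ sSup S := le_csSup hbdd h0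
  have hlt : ∀ u, 0 ≤ u → u < sSup S → φ.toFun x u ∈ N := by
    intro u hu0 hu
    obtain ⟨t, ht, hut⟩ := exists_lt_of_lt_csSup ⟨0, h0⟩ hu
    exact ht.2 u ⟨hu0, hut.le⟩
  have hcont : Continuous (φ.toFun x) :=
    φ.continuous_toFun.comp (Continuous.prodMk_right x)
  have hend : φ.toFun x (sSup S) ∈ N :=
    closure_minimal (fun t ht => ht.2 t ⟨ht.1, le_rfl⟩) (hcl.preimage hcont)
      (csSup_mem_closure ⟨0, h0⟩ hbdd)
  have hin : ∀ u ∈ Icc 0 (sSup S), φ.toFun x u ∈ N := by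
    intro u hu
    rcases hu.2.lt_or_eq with h | h
    · exact hlt u hu.1 h
    · rw [h]; exact hend
  refine ⟨hτ0, hin, fun δ hδ => ?_⟩
  by_contra! h
  have hmem : sSup S + δ ∈ S := by
    refine ⟨by linarith, fun u hu => ?_⟩
    rcases le_or_gt u (sSup S) with hle | hgt
    · exact hin u ⟨hu.1, hle⟩
    · have := h (u - sSup S) ⟨by linarith, by linarith [hu.2]⟩
      rwa [φ.map_add, add_sub_cancel] at this
  linarith [le_csSup hbdd hmem]

/-- Points of `N` whose backward orbit stays in `N` for a long enough time lie in any given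
neighbourhood of `N⁻`. -/
theorem exists_time_backward_mem (φ : FlowRn n) {N U : Set (Fin n → ℝ)} (hNc : IsCompact N)
    (hU : IsOpen U) (hNU : negAsymptotic φ N ⊆ U) :
    ∃ s₀ > (0 : ℝ), ∀ y, (∀ t ∈ Icc (-s₀) 0, φ.toFun y t ∈ N) → y ∈ U := by
  by_contra! hcon
  -- The points outside `U` whose orbit over `[-(k + 1), 0]` lies in `N`.
  let C : ℕ → Set (Fin n → ℝ) := fun k =>
    Uᶜ ∩ ⋂ t ∈ Icc (-((k : ℝ) + 1)) 0, (fun y => φ.toFun y t) ⁻¹' N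
  have hclosed : ∀ k, IsClosed (C k) := fun k =>
    hU.isClosed_compl.inter <| isClosed_biInter fun t _ =>
      hNc.isClosed.preimage (φ.continuous_toFun.comp (Continuous.prodMk_left t))
  have hsub : C 0 ⊆ N := by
    intro y hy
    have := mem_iInter₂.1 hy.2 0 ⟨by simp, le_rfl⟩
    simpa [φ.map_zero] using this
  obtain ⟨y, hy⟩ : (⋂ k, C k).Nonempty := by
    refine IsCompact.nonempty_iInter_of_sequence_nonempty_isCompact_isClosed C ?_ ?_
      (hNc.of_isClosed_subset (hclosed 0) hsub) hclosed
    · intro k y hy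
      refine ⟨hy.1, mem_iInter₂.2 fun t ht => mem_iInter₂.1 hy.2 t ⟨?_, ht.2⟩⟩
      push_cast
      linarith [ht.1]
    · intro k
      obtain ⟨y, hy, hyU⟩ := hcon ((k : ℝ) + 1) (by positivity)
      exact ⟨y, hyU, mem_iInter₂.2 hy⟩
  rw [mem_iInter] at hy
  refine (hy 0).1 (hNU ⟨hsub (hy 0), fun t ht => ?_⟩)
  obtain ⟨k, hk⟩ := exists_nat_ge (-t)
  exact mem_iInter₂.1 (hy k).2 t ⟨by linarith, ht⟩

/-- For every open `U ⊇ N⁻` there is `s₀ > 0` such that: (a) `x s ∈ U` for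
every `x ∈ N⁺`, `s ≥ s₀`; (b) `x t ∈ U` for every `x ∈ N ∖ N⁺` and `s₀ ≤ t ≤ τ(x)`;
consequently (c) `f_s (N) ⊆ U ∪ L` for every `s ≥ s₀`. -/
theorem flowMap_image_small (φ : FlowRn n) (K N L L' : Set (Fin n → ℝ))
    (hN : IsolatingBlock φ K N L L') :
    ∀ U : Set (Fin n → ℝ), IsOpen U → negAsymptotic φ N ⊆ U →
    ∃ s₀ > (0 : ℝ),
      (∀ x ∈ posAsymptotic φ N, ∀ s ≥ s₀, φ.toFun x s ∈ U) ∧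
      (∀ x ∈ N \ posAsymptotic φ N, ∀ t : ℝ, s₀ ≤ t → t ≤ exitTime φ N x → φ.toFun x t ∈ U) ∧
      (∀ s ≥ s₀, flowMap φ N s '' N ⊆ U ∪ L) := by
  intro U hU hNU
  obtain ⟨s₀, hs₀, hback⟩ := exists_time_backward_mem φ hN.compact_N hU hNU
  have key : ∀ x t, s₀ ≤ t → (∀ u ∈ Icc 0 t, φ.toFun x u ∈ N) → φ.toFun x t ∈ U := by
    intro x t ht hx
    refine hback _ fun u hu => ?_
    rw [φ.map_add]
    exact hx _ ⟨by linarith [hu.1], by linarith [hu.2]⟩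
  have hcl := hN.compact_N.isClosed
  refine ⟨s₀, hs₀, fun x hx s hs => key x s hs fun u hu => hx.2 u hu.1,
    fun x hx t ht htτ => key x t ht fun u hu =>
      (exitTime_spec_s2 φ hcl hx).2.1 u ⟨hu.1, hu.2.trans htτ⟩, ?_⟩
  rintro s hs _ ⟨x, hx, rfl⟩
  unfold flowMap
  split_ifs with h
  · exact Or.inl (key x s hs h)
  right
  obtain ⟨hτ, hmem, hexit⟩ := exitTime_spec_s2 φ hcl (x := x) ⟨hx, fun hP => h fun u hu => hP.2 u hu.1⟩
  have hcont : Continuous (φ.toFun (φ.toFun x (exitTime φ N x))) :=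
    φ.continuous_toFun.comp (Continuous.prodMk_right _)
  have hz : φ.toFun x (exitTime φ N x) ∈ N := hmem _ ⟨hτ, le_rfl⟩
  generalize φ.toFun x (exitTime φ N x) = z at hexit hcont hz ⊢
  by_contra hzL
  -- From a point of `N` outside `L` the orbit stays in `N` for a short time, against `hexit`.
  obtain ⟨δ, hδ, hstay⟩ : ∃ δ > (0 : ℝ), ∀ t ∈ Ioc (0 : ℝ) δ, φ.toFun z t ∈ interior N := by
    by_cases hzi : z ∈ interior N
    · have hnhds : φ.toFun z ⁻¹' interior N ∈ nhds (0 : ℝ) :=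
        (isOpen_interior.preimage hcont).mem_nhds (by simpa [φ.map_zero] using hzi)
      obtain ⟨δ, hδ, hball⟩ := Metric.mem_nhds_iff.1 hnhds
      refine ⟨δ / 2, half_pos hδ, fun t ht => hball ?_⟩
      rw [Metric.mem_ball, Real.dist_eq, sub_zero, abs_of_pos ht.1]
      linarith [ht.2]
    · exact hN.enter_to_interior z ⟨⟨subset_closure hz, hzi⟩, hzL⟩
  obtain ⟨t, ht, htN⟩ := hexit δ hδ
  exact htN (interior_subset (hstay t ht))
end

section
/- Let φ be a flow on ℝⁿ and let N be an isolating block for K with exit set L and entrance set L', such that N = N⁺ ∪ N⁻. Then L ⊆ N⁻ ∖ K and every x ∈ L has ω*(x) nonempty and contained in K, so that n⁻ = N⁻ ∩ L equals L and L is an initial section of the truncated unstable manifold of K; dually, L' ⊆ N⁺ ∖ K, every x ∈ L' has ω(x) nonempty and contained in K, and n⁺ = N⁺ ∩ L' equals L'. -/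
/-!
A point of `L` lies in `N` but leaves `N` immediately in forward time, so it is not in `N⁺`, and
the hypothesis `N = N⁺ ∪ N⁻` puts it in `N⁻`; it is not in `K` because `L ⊆ ∂N` and `K ⊆ int N`.
The backward half-orbit then stays in the compact set `N`, so its limit set is nonempty, contained
in `N` and invariant, and hence contained in `K`, the maximal invariant subset of `N`. The claims
about `L'` follow by reversing time.

Both limit sets are the sets of cluster points of `t ↦ x t`, along `atTop` for `ω` and along `atBot`
for `ω*`. Invariance only uses that the filter is preserved by translations, so
`IsolatingBlock.clusterPoints` treats the two directions at once.
-/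

open Set

variable {n : ℕ}

/-- The omega-limit `ω (x) = ⋂_{t ≥ 0} cl (x [t, ∞))`. -/
def omegaLim (φ : FlowRn n) (x : Fin n → ℝ) : Set (Fin n → ℝ) :=
  ⋂ t ∈ Ici (0 : ℝ), closure (φ.toFun x '' Ici t)

/-- The negative omega-limit `ω* (x) = ⋂_{t ≤ 0} cl (x (-∞, t])`. -/
def omegaStar (φ : FlowRn n) (x : Fin n → ℝ) : Set (Fin n → ℝ) :=
  ⋂ t ∈ Iic (0 : ℝ), closure (φ.toFun x '' Iic t)

/-- The unstable manifold `W^u (K) = {x : ω* (x) is nonempty and contained in K}`. -/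
def unstableManifold (φ : FlowRn n) (K : Set (Fin n → ℝ)) : Set (Fin n → ℝ) :=
  {x | (omegaStar φ x).Nonempty ∧ omegaStar φ x ⊆ K}

open Filter Topology

lemma mem_omegaLim_iff (φ : FlowRn n) (x y : Fin n → ℝ) :
    y ∈ omegaLim φ x ↔ MapClusterPt y atTop (φ.toFun x) := by
  have hb : (map (φ.toFun x) atTop).HasBasis (fun t : ℝ => 0 ≤ t)
      (fun t => φ.toFun x '' Ici t) := (atTop_basis' (0 : ℝ)).map _
  unfold MapClusterPt
  rw [hb.clusterPt_iff_forall_mem_closure]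
  simp [omegaLim]

lemma mem_omegaStar_iff (φ : FlowRn n) (x y : Fin n → ℝ) :
    y ∈ omegaStar φ x ↔ MapClusterPt y atBot (φ.toFun x) := by
  have hb : (map (φ.toFun x) atBot).HasBasis (fun t : ℝ => t ≤ 0)
      (fun t => φ.toFun x '' Iic t) := (atBot_basis' (0 : ℝ)).map _
  unfold MapClusterPt
  rw [hb.clusterPt_iff_forall_mem_closure]
  simp [omegaStar]

/-- The cluster points of an orbit along a translation-invariant filter on `ℝ` form an
invariant set. -/
lemma FlowRn.isInvariant_clusterPoints (φ : FlowRn n) (x : Fin n → ℝ) (l : Filter ℝ)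
    (hl : ∀ s : ℝ, Tendsto (fun t => t + s) l l) :
    φ.IsInvariant {y | MapClusterPt y l (φ.toFun x)} := by
  intro y hy s
  have hc : Continuous fun z => φ.toFun z s :=
    φ.continuous_toFun.comp (continuous_id.prodMk continuous_const)
  have h : MapClusterPt (φ.toFun y s) l ((fun z => φ.toFun z s) ∘ φ.toFun x) :=
    MapClusterPt.continuousAt_comp hc.continuousAt hy
  have he : (fun z => φ.toFun z s) ∘ φ.toFun x = φ.toFun x ∘ fun t => t + s := by
    funext t
    exact φ.map_add x t s
  rw [he] at h
  exact h.of_comp (hl s)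

/-- If the orbit of `x` is eventually in an isolating block along a translation-invariant
filter, then its limit set along that filter is nonempty and contained in `K`. -/
lemma IsolatingBlock.clusterPoints {φ : FlowRn n} {K N L L' : Set (Fin n → ℝ)}
    (hN : IsolatingBlock φ K N L L') (x : Fin n → ℝ) (l : Filter ℝ) [l.NeBot]
    (hl : ∀ s : ℝ, Tendsto (fun t => t + s) l l) (hx : ∀ᶠ t in l, φ.toFun x t ∈ N) :
    {y | MapClusterPt y l (φ.toFun x)}.Nonempty ∧ {y | MapClusterPt y l (φ.toFun x)} ⊆ K := by
  have hle : map (φ.toFun x) l ≤ 𝓟 N := tendsto_principal.2 hx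
  constructor
  · obtain ⟨y, -, hy⟩ := hN.compact_N hle
    exact ⟨y, hy⟩
  · refine hN.maximal _ (fun y hy => ?_) (φ.isInvariant_clusterPoints x l hl)
    exact hN.compact_N.isClosed.closure_subset
      (mem_closure_iff_clusterPt.2 (ClusterPt.mono hy hle))

lemma IsolatingBlock.frontier_subset {φ : FlowRn n} {K N L L' : Set (Fin n → ℝ)}
    (hN : IsolatingBlock φ K N L L') : frontier N ⊆ N \ K :=
  fun _ hx => ⟨hN.compact_N.isClosed.frontier_subset hx, fun hK => hx.2 (hN.subset_interior hK)⟩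

lemma IsolatingBlock.exit_subset_negAsymptotic {φ : FlowRn n} {K N L L' : Set (Fin n → ℝ)}
    (hN : IsolatingBlock φ K N L L') (hdecomp : N = posAsymptotic φ N ∪ negAsymptotic φ N) :
    L ⊆ negAsymptotic φ N \ K := by
  intro x hx
  obtain ⟨hxN, hxK⟩ := hN.frontier_subset (hN.exit_subset hx)
  refine ⟨?_, hxK⟩
  rw [hdecomp] at hxN
  refine hxN.resolve_left fun h => ?_
  obtain ⟨δ, hδ, hout⟩ := hN.exit_strict x hx
  exact hout δ ⟨hδ, le_rfl⟩ (h.2 δ hδ.le)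

lemma IsolatingBlock.entrance_subset_posAsymptotic {φ : FlowRn n} {K N L L' : Set (Fin n → ℝ)}
    (hN : IsolatingBlock φ K N L L') (hdecomp : N = posAsymptotic φ N ∪ negAsymptotic φ N) :
    L' ⊆ posAsymptotic φ N \ K := by
  intro x hx
  obtain ⟨hxN, hxK⟩ := hN.frontier_subset (hN.entrance_subset hx)
  refine ⟨?_, hxK⟩
  rw [hdecomp] at hxN
  refine hxN.resolve_right fun h => ?_
  obtain ⟨ε, hε, hout⟩ := hN.entrance_strict x hx
  exact hout (-ε) ⟨le_rfl, neg_lt_zero.2 hε⟩ (h.2 (-ε) (neg_nonpos.2 hε.le))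

/-- If `N = N⁺ ∪ N⁻` then `L ⊆ N⁻ ∖ K`, every `x ∈ L` has `ω* (x)`
nonempty and contained in `K` (so `n⁻ = N⁻ ∩ L` equals `L` and `L` is a compact initial
section of the truncated unstable manifold `W^u (K) ∖ K`); dually `L' ⊆ N⁺ ∖ K`, every
`x ∈ L'` has `ω (x)` nonempty and contained in `K`, and `n⁺ = N⁺ ∩ L'` equals `L'`. -/
theorem exit_set_initial_section (φ : FlowRn n) (K N L L' : Set (Fin n → ℝ))
    (hN : IsolatingBlock φ K N L L')
    (hdecomp : N = posAsymptotic φ N ∪ negAsymptotic φ N) :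
    (L ⊆ negAsymptotic φ N \ K ∧
      (∀ x ∈ L, (omegaStar φ x).Nonempty ∧ omegaStar φ x ⊆ K) ∧
      negAsymptotic φ N ∩ L = L ∧
      IsCompact L ∧ L ⊆ unstableManifold φ K \ K) ∧
    (L' ⊆ posAsymptotic φ N \ K ∧
      (∀ x ∈ L', (omegaLim φ x).Nonempty ∧ omegaLim φ x ⊆ K) ∧
      posAsymptotic φ N ∩ L' = L') := by
  have hL := hN.exit_subset_negAsymptotic hdecomp
  have hL' := hN.entrance_subset_posAsymptotic hdecomp
  have hstar : ∀ x ∈ L, (omegaStar φ x).Nonempty ∧ omegaStar φ x ⊆ K := by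
    intro x hx
    rw [show omegaStar φ x = {y | MapClusterPt y atBot (φ.toFun x)} from
      Set.ext (mem_omegaStar_iff φ x)]
    exact hN.clusterPoints x atBot (fun s => tendsto_atBot_add_const_right _ s tendsto_id)
      ((eventually_le_atBot 0).mono (hL hx).1.2)
  have hlim : ∀ x ∈ L', (omegaLim φ x).Nonempty ∧ omegaLim φ x ⊆ K := by
    intro x hx
    rw [show omegaLim φ x = {y | MapClusterPt y atTop (φ.toFun x)} from
      Set.ext (mem_omegaLim_iff φ x)]
    exact hN.clusterPoints x atTop (fun s => tendsto_atTop_add_const_right _ s tendsto_id)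
      ((eventually_ge_atTop 0).mono (hL' hx).1.2)
  exact ⟨⟨hL, hstar, inter_eq_right.2 fun x hx => (hL hx).1, hN.compact_L,
    fun x hx => ⟨hstar x hx, (hL hx).2⟩⟩, hL', hlim, inter_eq_right.2 fun x hx => (hL' hx).1⟩
end
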